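/- arXiv:2411.10791 — 5 statements merged into one kernel-verified Lean document; each statement's English description precedes it below -/
import Mathlib

section
/- Let v be nonnegative and integrable with respect to g on [q1, q2]. The optimal revenue of the fixed-price signaling mechanism facing a single ex-interim rational buyer equals the buyer's prior expected valuation: the supremum of p · ∫_{q1}^{q2} π(q) g(q) dq over all prices p ≥ 0 and measurable π : ℝ → [0, 1] satisfying both obedience constraints ∫_{q1}^{q2} π(q)(v(q) − p) g(q) dq ≥ 0 and ∫_{q1}^{q2} π(q)(v(q) − p) g(q) dq ≥ ∫_{q1}^{q2} v(q) g(q) dq − p, equals ∫_{q1}^{q2} v(q) g(q) dq, and this supremum is attained. -/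
/-! The value `∫ v g` is reached by the uninformative scheme `π = 1` at price `p = ∫ v g`, for
which the buyer's obedience integral vanishes. Conversely, for any obedient `(p, π)`,
`p ∫ π g = ∫ π v g - ∫ π (v - p) g ≤ ∫ π v g ≤ ∫ v g`, using the obedience constraint for the
buy signal and then `π ≤ 1`, `v g ≥ 0`. -/

open MeasureTheory

/-- A measurable scheme with values in `[0, 1]` preserves interval integrability. -/
lemma intervalIntegrable_scheme_mul {a b : ℝ} {π f : ℝ → ℝ} (hπ : Measurable π)
    (hπ01 : ∀ q, π q ∈ Set.Icc (0 : ℝ) 1) (hf : IntervalIntegrable f volume a b) :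
    IntervalIntegrable (fun q => π q * f q) volume a b := by
  refine hf.mono_fun (hπ.aestronglyMeasurable.mul hf.def'.aestronglyMeasurable)
    (Filter.Eventually.of_forall fun q => ?_)
  beta_reduce
  rw [norm_mul, Real.norm_of_nonneg (hπ01 q).1]
  exact mul_le_of_le_one_left (norm_nonneg _) (hπ01 q).2

/-- With a single ex-interim rational buyer, the optimal revenue of the fixed-price
signaling mechanism equals the buyer's prior expected valuation `∫ v g`: the supremum over all
prices `p ≥ 0` and measurable obedient signaling schemes `π : ℝ → [0,1]` of the revenue
`p · ∫ π g` equals `∫ v g`, and it is attained. -/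
theorem ex_interim_single_buyer_optimal_revenue
    (q1 q2 : ℝ) (hq : q1 < q2)
    (g : ℝ → ℝ) (hg_meas : Measurable g)
    (hg_nonneg : ∀ q, 0 ≤ g q)
    (hg_int : IntervalIntegrable g MeasureTheory.volume q1 q2)
    (hg_one : (∫ q in q1..q2, g q) = 1)
    (v : ℝ → ℝ)
    (hv_nonneg : ∀ q ∈ Set.Icc q1 q2, 0 ≤ v q)
    (hv_int : IntervalIntegrable (fun q => v q * g q) MeasureTheory.volume q1 q2) :
    IsGreatest {r : ℝ | ∃ (p : ℝ) (π : ℝ → ℝ),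
        0 ≤ p ∧ Measurable π ∧ (∀ q, π q ∈ Set.Icc (0 : ℝ) 1) ∧
        0 ≤ (∫ q in q1..q2, π q * (v q - p) * g q) ∧
        (∫ q in q1..q2, v q * g q) - p ≤ (∫ q in q1..q2, π q * (v q - p) * g q) ∧
        r = p * ∫ q in q1..q2, π q * g q}
      (∫ q in q1..q2, v q * g q) := by
  constructor
  · have h0 : (∫ q in q1..q2, (1 : ℝ) * (v q - ∫ x in q1..q2, v x * g x) * g q) = 0 := by
      simp only [one_mul, sub_mul]
      rw [intervalIntegral.integral_sub hv_int (hg_int.const_mul _),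
        intervalIntegral.integral_const_mul, hg_one, mul_one, sub_self]
    refine ⟨∫ q in q1..q2, v q * g q, fun _ => 1, ?_, measurable_const, by simp, h0.ge, ?_, ?_⟩
    · exact intervalIntegral.integral_nonneg hq.le
        fun q hmem => mul_nonneg (hv_nonneg q hmem) (hg_nonneg q)
    · rw [h0, sub_self]
    · simp [hg_one]
  · rintro r ⟨p, π, -, hπ, hπ01, hbuy, -, rfl⟩
    have hπg := intervalIntegrable_scheme_mul hπ hπ01 hg_int
    have hπvg := intervalIntegrable_scheme_mul hπ hπ01 hv_int
    have hsplit : (∫ q in q1..q2, π q * (v q - p) * g q)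
        = (∫ q in q1..q2, π q * (v q * g q)) - p * ∫ q in q1..q2, π q * g q := by
      rw [← intervalIntegral.integral_const_mul,
        ← intervalIntegral.integral_sub hπvg (hπg.const_mul p)]
      congr 1
      ext q
      ring
    have hle : (∫ q in q1..q2, π q * (v q * g q)) ≤ ∫ q in q1..q2, v q * g q :=
      intervalIntegral.integral_mono_on hq.le hπvg hv_int fun q hmem =>
        mul_le_of_le_one_left (mul_nonneg (hv_nonneg q hmem) (hg_nonneg q)) (hπ01 q).2
    linarith
end

section
/- Suppose there are at least two buyers: let N be a finite set with |N| ≥ 2, and for each i ∈ N let c_i ∈ [q1, q2] (c_i = v_i⁻¹(p)). Assume the top interval has positive mass: ∫_{c}^{q2} g(q) dq > 0, where c = max_{i ∈ N} c_i. Then there exist no measurable functions π_0 and (π_i)_{i ∈ N} from ℝ to ℝ with π_0(q) ≥ 0, π_i(q) ≥ 0 and π_0(q) + Σ_{i ∈ N} π_i(q) = 1 for all q ∈ [q1, q2], such that for every i ∈ N both ex-post obedience constraints hold: ∫_{q1}^{c_i} π_i(q) g(q) dq = 0 and ∫_{c_i}^{q2} (1 − π_i(q)) g(q) dq = 0. In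 other words, with multiple ex-post rational buyers there is no obedient fixed-price signaling mechanism. -/
/-!
Above the largest cutoff `m`, obedience forces every buyer to be recommended almost surely:
`(1 - π i) * g` is nonnegative and has zero integral over `[c i, q2] ⊇ [m, q2]`. For two distinct
buyers `i`, `j` the recommendations are mutually exclusive, `π i + π j ≤ 1`, so
`g ≤ (1 - π i) * g + (1 - π j) * g` on `[m, q2]`. Integrating gives `∫ g ≤ 0` there,
contradicting the positive mass of the top interval.
-/

open MeasureTheory

/-- With at least two ex-post rational buyers, where `c i = v_i⁻¹(p) ∈ [q1, q2]`
and the top interval `[max_i c i, q2]` has positive mass under `g`, there exists no signaling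
scheme `(π_0, (π_i))` (nonnegative, summing to one on `[q1, q2]`) that satisfies both ex-post
obedience constraints for every buyer. -/
theorem ex_post_multi_buyer_no_obedient_mechanism
    {ι : Type*} [Fintype ι] [Nonempty ι] (hcard : 2 ≤ Fintype.card ι)
    (q1 q2 : ℝ) (hq : q1 < q2)
    (g : ℝ → ℝ) (hg_meas : Measurable g)
    (hg_nonneg : ∀ q, 0 ≤ g q)
    (hg_int : IntervalIntegrable g MeasureTheory.volume q1 q2)
    (hg_one : (∫ q in q1..q2, g q) = 1)
    (c : ι → ℝ) (hc : ∀ i, c i ∈ Set.Icc q1 q2)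
    (hmass : 0 < ∫ q in (Finset.univ.sup' Finset.univ_nonempty c)..q2, g q) :
    ¬ ∃ (π0 : ℝ → ℝ) (π : ι → ℝ → ℝ),
        Measurable π0 ∧ (∀ i, Measurable (π i)) ∧
        (∀ q ∈ Set.Icc q1 q2,
          0 ≤ π0 q ∧ (∀ i, 0 ≤ π i q) ∧ π0 q + ∑ i, π i q = 1) ∧
        (∀ i, (∫ q in q1..(c i), π i q * g q) = 0 ∧
          (∫ q in (c i)..q2, (1 - π i q) * g q) = 0) := by
  rintro ⟨π0, π, -, hπ, hprob, hob⟩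
  set m := Finset.univ.sup' Finset.univ_nonempty c with hm
  have hcm : ∀ i, c i ≤ m := fun i => Finset.le_sup' c (Finset.mem_univ i)
  have hm2 : m ≤ q2 := Finset.sup'_le _ _ fun i _ => (hc i).2
  have hm1 : q1 ≤ m := (hc (Classical.arbitrary ι)).1.trans (hcm _)
  have hle : ∀ i, ∀ q ∈ Set.Icc q1 q2, π i q ≤ 1 := fun i q hqm => by
    obtain ⟨h0, hn, hs⟩ := hprob q hqm
    have := Finset.single_le_sum (fun k _ => hn k) (Finset.mem_univ i)
    linarith
  have hint : ∀ i, IntervalIntegrable (fun q => (1 - π i q) * g q) volume q1 q2 := fun i => by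
    refine hg_int.mono_fun ((measurable_const.sub (hπ i)).mul hg_meas).aestronglyMeasurable ?_
    rw [Set.uIoc_of_le hq.le]
    filter_upwards [ae_restrict_mem measurableSet_Ioc] with q hqm
    have hqm' := Set.Ioc_subset_Icc_self hqm
    have h1 := hle i q hqm'
    have h2 := (hprob q hqm').2.1 i
    rw [norm_mul, Real.norm_eq_abs (1 - π i q), abs_of_nonneg (by linarith)]
    exact mul_le_of_le_one_left (norm_nonneg _) (by linarith)
  have hsub : ∀ a ∈ Set.Icc q1 q2, Set.uIcc a q2 ⊆ Set.uIcc q1 q2 := fun a ha =>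
    Set.uIcc_subset_uIcc (Set.Icc_subset_uIcc ha) Set.right_mem_uIcc
  have htop : ∀ i, (∫ q in m..q2, (1 - π i q) * g q) ≤ 0 := fun i => by
    rw [← (hob i).2]
    refine intervalIntegral.integral_mono_interval (hcm i) hm2 le_rfl ?_
      ((hint i).mono_set (hsub _ (hc i)))
    filter_upwards [ae_restrict_mem measurableSet_Ioc] with q hqm
    have h1 := hle i q ⟨(hc i).1.trans hqm.1.le, hqm.2⟩
    exact mul_nonneg (by linarith) (hg_nonneg q)
  obtain ⟨i, j, hij⟩ := Fintype.one_lt_card_iff.mp (show 1 < Fintype.card ι by omega)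
  have hintm : ∀ k, IntervalIntegrable (fun q => (1 - π k q) * g q) volume m q2 :=
    fun k => (hint k).mono_set (hsub m ⟨hm1, hm2⟩)
  have key : (∫ q in m..q2, g q) ≤ ∫ q in m..q2, ((1 - π i q) * g q + (1 - π j q) * g q) := by
    refine intervalIntegral.integral_mono_on hm2 (hg_int.mono_set (hsub m ⟨hm1, hm2⟩))
      ((hintm i).add (hintm j)) fun q hqm => ?_
    obtain ⟨h0, hn, hs⟩ := hprob q ⟨hm1.trans hqm.1, hqm.2⟩
    have h2 : π i q + π j q ≤ ∑ k, π k q :=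
      Finset.add_le_sum (fun k _ => hn k) (Finset.mem_univ i) (Finset.mem_univ j) hij
    nlinarith [hg_nonneg q]
  rw [intervalIntegral.integral_add (hintm i) (hintm j)] at key
  linarith [htop i, htop j]
end

section
/- Let N be a finite nonempty set of buyers, for each i ∈ N let c_i ∈ [q1, q2] (c_i = v_i⁻¹(p)), and let c_min = min_{i ∈ N} c_i. Suppose the measurable functions π_i : ℝ → ℝ satisfy π_i(q) ≥ 0 and Σ_{i ∈ N} π_i(q) ≤ 1 for all q ∈ [q1, q2], and the obedience constraints ∫_{q1}^{c_i} π_i(q) g(q) dq = 0 for every i ∈ N. Then the probability that the item is sold satisfies ∫_{q1}^{q2} Σ_{i ∈ N} π_i(q) g(q) dq ≤ 1 − G(c_min), and hence the seller's revenue is at most (1 − G(c_min)) · p when p ≥ 0. -/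
open MeasureTheory

/-!
Let `m = c_min`. Each `π i * g` is nonnegative and dominated by `g` on `[q1, q2]`, hence integrable
there. Since `m ≤ c i`, obedience forces `∫_{q1}^m π i * g ≤ ∫_{q1}^{c i} π i * g = 0`, so nothing
is sold below quality `m`. Above `m` the total recommendation probability is at most one, so at
most `∫_m^{q2} g = 1 - G(m)` is sold.
-/

/-- With multiple ex-post rational buyers who may only buy upon recommendation,
any signaling scheme `(π_i)` (nonnegative, summing to at most one on `[q1, q2]`) satisfying the
obedience constraints `∫_{q1}^{c_i} π_i g = 0` sells the item with probability at most
`1 − G(c_min)` where `c_min = min_i c_i`, and hence yields revenue at most `(1 − G(c_min)) · p`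
for any price `p ≥ 0`. -/
theorem ex_post_multi_buyer_revenue_upper_bound
    {ι : Type*} [Fintype ι] [Nonempty ι]
    (q1 q2 : ℝ) (hq : q1 < q2)
    (g : ℝ → ℝ) (hg_meas : Measurable g)
    (hg_nonneg : ∀ q, 0 ≤ g q)
    (hg_int : IntervalIntegrable g MeasureTheory.volume q1 q2)
    (hg_one : (∫ q in q1..q2, g q) = 1)
    (c : ι → ℝ) (hc : ∀ i, c i ∈ Set.Icc q1 q2)
    (π : ι → ℝ → ℝ) (hπ_meas : ∀ i, Measurable (π i))
    (hπ_nonneg : ∀ i, ∀ q ∈ Set.Icc q1 q2, 0 ≤ π i q)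
    (hπ_sum : ∀ q ∈ Set.Icc q1 q2, (∑ i, π i q) ≤ 1)
    (hob : ∀ i, (∫ q in q1..(c i), π i q * g q) = 0)
    (p : ℝ) (hp : 0 ≤ p) :
    (∫ q in q1..q2, (∑ i, π i q) * g q)
        ≤ 1 - (∫ q in q1..(Finset.univ.inf' Finset.univ_nonempty c), g q) ∧
    p * (∫ q in q1..q2, (∑ i, π i q) * g q)
        ≤ (1 - (∫ q in q1..(Finset.univ.inf' Finset.univ_nonempty c), g q)) * p := by
  set m := Finset.univ.inf' Finset.univ_nonempty c with hm
  have hmc : ∀ i, m ≤ c i := fun i => Finset.inf'_le _ (Finset.mem_univ i)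
  have hm1 : q1 ≤ m := Finset.le_inf' _ _ fun i _ => (hc i).1
  have hm2 : m ≤ q2 := (hmc (Classical.arbitrary ι)).trans (hc _).2
  have hπ_one : ∀ i, ∀ q ∈ Set.Icc q1 q2, π i q ≤ 1 := fun i q hqm =>
    (Finset.single_le_sum (f := fun j => π j q) (fun j _ => hπ_nonneg j q hqm)
      (Finset.mem_univ i)).trans (hπ_sum q hqm)
  have hint : ∀ i, IntervalIntegrable (fun q => π i q * g q) volume q1 q2 := by
    intro i
    refine hg_int.mono_fun ((hπ_meas i).mul hg_meas).aestronglyMeasurable ?_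
    rw [Set.uIoc_of_le hq.le]
    filter_upwards [ae_restrict_mem measurableSet_Ioc] with q hqm
    have hqI := Set.Ioc_subset_Icc_self hqm
    rw [Real.norm_of_nonneg (mul_nonneg (hπ_nonneg i q hqI) (hg_nonneg q)),
      Real.norm_of_nonneg (hg_nonneg q)]
    exact mul_le_of_le_one_left (hg_nonneg q) (hπ_one i q hqI)
  have hsub : ∀ a b, q1 ≤ a → a ≤ b → b ≤ q2 → Set.uIcc a b ⊆ Set.uIcc q1 q2 := by
    intro a b h1 h2 h3
    rw [Set.uIcc_of_le h2, Set.uIcc_of_le hq.le]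
    exact Set.Icc_subset_Icc h1 h3
  have hsub_low := hsub q1 m le_rfl hm1 hm2
  have hsub_high := hsub m q2 hm1 hm2 le_rfl
  have hint_sum : IntervalIntegrable (fun q => (∑ i, π i q) * g q) volume q1 q2 := by
    simp only [Finset.sum_mul]
    simpa only [Finset.sum_fn] using
      IntervalIntegrable.sum Finset.univ (f := fun i q => π i q * g q) fun i _ => hint i
  have hlow : (∫ q in q1..m, (∑ i, π i q) * g q) ≤ 0 := by
    simp only [Finset.sum_mul]
    rw [intervalIntegral.integral_finsetSum fun i _ => (hint i).mono_set hsub_low]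
    refine Finset.sum_nonpos fun i _ => (hob i) ▸ ?_
    refine intervalIntegral.integral_mono_interval le_rfl hm1 (hmc i) ?_
      ((hint i).mono_set (hsub q1 (c i) le_rfl (hc i).1 (hc i).2))
    filter_upwards [ae_restrict_mem measurableSet_Ioc] with q hqm
    exact mul_nonneg (hπ_nonneg i q ⟨hqm.1.le, hqm.2.trans (hc i).2⟩) (hg_nonneg q)
  have hhigh : (∫ q in m..q2, (∑ i, π i q) * g q) ≤ ∫ q in m..q2, g q :=
    intervalIntegral.integral_mono_on hm2 (hint_sum.mono_set hsub_high)
      (hg_int.mono_set hsub_high) fun q hqm =>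
        mul_le_of_le_one_left (hg_nonneg q) (hπ_sum q ⟨hm1.trans hqm.1, hqm.2⟩)
  have hsplit_sum := intervalIntegral.integral_add_adjacent_intervals
    (hint_sum.mono_set hsub_low) (hint_sum.mono_set hsub_high)
  have hsplit_g := intervalIntegral.integral_add_adjacent_intervals
    (hg_int.mono_set hsub_low) (hg_int.mono_set hsub_high)
  have hmain : (∫ q in q1..q2, (∑ i, π i q) * g q) ≤ 1 - ∫ q in q1..m, g q := by
    linarith
  exact ⟨hmain, by rw [mul_comm]; exact mul_le_mul_of_nonneg_right hmain hp⟩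
end

section
/- Let N be a finite nonempty set of buyers, let c_i ∈ [q1, q2] for i ∈ N (c_i = v_i⁻¹(p)), let j ∈ N attain c_j = c_min = min_{i ∈ N} c_i, and define π*_j(q) = 𝟙{q ≥ c_min} and π*_i(q) = 0 for i ≠ j. Then π*_i(q) ≥ 0 and Σ_{i ∈ N} π*_i(q) ≤ 1 for all q, the obedience constraints ∫_{q1}^{c_i} π*_i(q) g(q) dq = 0 hold for every i ∈ N, and the seller's revenue equals p · ∫_{q1}^{q2} Σ_{i ∈ N} π*_i(q) g(q) dq = (1 − G(c_min)) · p. Thus (π*, p) attains the maximal revenue (1 − G(c_min)) · p among all obedient mechanisms at price p. -/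
/-!
The star mechanism sells exactly on `[c_min, q2]`, so its sale probability is `1 - G(c_min)`
(`integral_threshold_mul`); its only nontrivial obedience constraint, that of buyer `j`, integrates
a function vanishing below `c j`. For optimality, let `π` be obedient. Since `c_min ≤ c i` and the
integrand is nonnegative, obedience of buyer `i` forces `∫_{q1}^{c_min} π_i g ≤ 0`, so sales below
`c_min` contribute nothing. Above `c_min` the constraint `∑ i, π i ≤ 1` bounds the sale
probability by `∫_{c_min}^{q2} g`, which the star mechanism attains.
-/

open MeasureTheory

theorem integral_threshold_below (g : ℝ → ℝ) {a c : ℝ} (hac : a ≤ c) :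
    (∫ q in a..c, (if c ≤ q then (1 : ℝ) else 0) * g q) = 0 := by
  apply intervalIntegral.integral_zero_ae
  -- The integrand may be nonzero at the endpoint `c`, which is a null set.
  have hne : ∀ᵐ q : ℝ, q ≠ c := by simp [ae_iff]
  filter_upwards [hne] with q hqc hq
  rw [Set.uIoc_of_le hac] at hq
  rw [if_neg (not_le.mpr (lt_of_le_of_ne hq.2 hqc)), zero_mul]

theorem integral_threshold_mul {g : ℝ → ℝ} (hg : Measurable g) {a b c : ℝ} (hac : a ≤ c)
    (hcb : c ≤ b) (hi : IntervalIntegrable g volume a b) :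
    (∫ q in a..b, (if c ≤ q then (1 : ℝ) else 0) * g q) = ∫ q in c..b, g q := by
  have hint : IntervalIntegrable (fun q => (if c ≤ q then (1 : ℝ) else 0) * g q) volume a b := by
    refine hi.mono_fun ?_ ?_
    · exact ((Measurable.ite measurableSet_Ici measurable_const measurable_const).mul
        hg).aestronglyMeasurable
    · refine Filter.Eventually.of_forall fun q => ?_
      by_cases h : c ≤ q <;> simp [h]
  have hsub1 : Set.uIcc a c ⊆ Set.uIcc a b := by
    rw [Set.uIcc_of_le hac, Set.uIcc_of_le (hac.trans hcb)]
    exact Set.Icc_subset_Icc_right hcb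
  have hsub2 : Set.uIcc c b ⊆ Set.uIcc a b := by
    rw [Set.uIcc_of_le hcb, Set.uIcc_of_le (hac.trans hcb)]
    exact Set.Icc_subset_Icc_left hac
  rw [← intervalIntegral.integral_add_adjacent_intervals (hint.mono_set hsub1)
    (hint.mono_set hsub2), integral_threshold_below g hac, zero_add]
  refine intervalIntegral.integral_congr fun q hq => ?_
  rw [Set.uIcc_of_le hcb] at hq
  simp [hq.1]


/-- With multiple ex-post rational buyers who may only buy upon recommendation,
let `j` attain `c j = c_min = min_i c_i` and let `π*_j(q) = 𝟙{q ≥ c_min}`, `π*_i(q) = 0` for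
`i ≠ j`. Then `π*` is a valid signaling scheme, satisfies all obedience constraints
`∫_{q1}^{c_i} π*_i g = 0`, yields revenue `(1 − G(c_min)) · p`, and attains the maximal revenue
among all obedient mechanisms at price `p`. -/
theorem ex_post_multi_buyer_optimal_mechanism
    {ι : Type*} [Fintype ι] [Nonempty ι]
    (q1 q2 : ℝ) (hq : q1 < q2)
    (g : ℝ → ℝ) (hg_meas : Measurable g)
    (hg_nonneg : ∀ q, 0 ≤ g q)
    (hg_int : IntervalIntegrable g MeasureTheory.volume q1 q2)
    (hg_one : (∫ q in q1..q2, g q) = 1)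
    (c : ι → ℝ) (hc : ∀ i, c i ∈ Set.Icc q1 q2)
    (j : ι) (hj : c j = Finset.univ.inf' Finset.univ_nonempty c)
    (πstar : ι → ℝ → ℝ)
    (hπstar_j : ∀ q, πstar j q = if c j ≤ q then (1 : ℝ) else 0)
    (hπstar_ne : ∀ i, i ≠ j → ∀ q, πstar i q = 0)
    (p : ℝ) (hp : 0 ≤ p) :
    (∀ i q, 0 ≤ πstar i q) ∧
    (∀ q, (∑ i, πstar i q) ≤ 1) ∧
    (∀ i, (∫ q in q1..(c i), πstar i q * g q) = 0) ∧
    p * (∫ q in q1..q2, (∑ i, πstar i q) * g q)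
      = (1 - ∫ q in q1..(c j), g q) * p ∧
    (∀ π : ι → ℝ → ℝ, (∀ i, Measurable (π i)) →
      (∀ i, ∀ q ∈ Set.Icc q1 q2, 0 ≤ π i q) →
      (∀ q ∈ Set.Icc q1 q2, (∑ i, π i q) ≤ 1) →
      (∀ i, (∫ q in q1..(c i), π i q * g q) = 0) →
      p * (∫ q in q1..q2, (∑ i, π i q) * g q)
        ≤ p * (∫ q in q1..q2, (∑ i, πstar i q) * g q)) := by
  have hcj : ∀ i, c j ≤ c i := fun i => hj ▸ Finset.inf'_le c (Finset.mem_univ i)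
  have hsum : ∀ q, (∑ i, πstar i q) = if c j ≤ q then (1 : ℝ) else 0 := fun q => by
    rw [Finset.sum_eq_single j (fun i _ hi => hπstar_ne i hi q) (by simp), hπstar_j]
  have hrev : (∫ q in q1..q2, (∑ i, πstar i q) * g q) = ∫ q in (c j)..q2, g q := by
    simp only [hsum]
    exact integral_threshold_mul hg_meas (hc j).1 (hc j).2 hg_int
  have hsub1 : ∀ i, Set.uIcc q1 (c i) ⊆ Set.uIcc q1 q2 := fun i => by
    rw [Set.uIcc_of_le (hc i).1, Set.uIcc_of_le hq.le]
    exact Set.Icc_subset_Icc_right (hc i).2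
  have hsub2 : Set.uIcc (c j) q2 ⊆ Set.uIcc q1 q2 := by
    rw [Set.uIcc_of_le (hc j).2, Set.uIcc_of_le hq.le]
    exact Set.Icc_subset_Icc_left (hc j).1
  refine ⟨fun i q => ?_, fun q => ?_, fun i => ?_, ?_, ?_⟩
  · by_cases hi : i = j
    · subst hi
      rw [hπstar_j]
      split_ifs <;> norm_num
    · rw [hπstar_ne i hi]
  · rw [hsum]
    split_ifs <;> norm_num
  · by_cases hi : i = j
    · subst hi
      simp only [hπstar_j]
      exact integral_threshold_below g (hc i).1
    · simp [hπstar_ne i hi]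
  · have hadd := intervalIntegral.integral_add_adjacent_intervals
      (hg_int.mono_set (hsub1 j)) (hg_int.mono_set hsub2)
    rw [hrev, mul_comm, ← hg_one, ← hadd]
    ring
  · intro π hm h0 h1 hob
    refine mul_le_mul_of_nonneg_left ?_ hp
    rw [hrev]
    have hint : ∀ i, IntervalIntegrable (fun q => π i q * g q) volume q1 q2 := fun i => by
      refine hg_int.mono_fun ((hm i).mul hg_meas).aestronglyMeasurable ?_
      refine (ae_restrict_iff' measurableSet_uIoc).mpr (Filter.Eventually.of_forall fun q hqm => ?_)
      rw [Set.uIoc_of_le hq.le] at hqm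
      have hqm' := Set.Ioc_subset_Icc_self hqm
      have hle : π i q ≤ 1 :=
        (Finset.single_le_sum (f := fun i => π i q) (fun k _ => h0 k q hqm')
          (Finset.mem_univ i)).trans (h1 q hqm')
      simp only [Real.norm_eq_abs, abs_mul, abs_of_nonneg (h0 i q hqm'),
        abs_of_nonneg (hg_nonneg q)]
      exact mul_le_of_le_one_left (hg_nonneg q) hle
    have hintS : IntervalIntegrable (fun q => (∑ i, π i q) * g q) volume q1 q2 := by
      simp only [Finset.sum_mul]
      simpa only [Finset.sum_fn] using
        IntervalIntegrable.sum Finset.univ (f := fun i q => π i q * g q) (fun i _ => hint i)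
    have hbelow : (∫ q in q1..(c j), (∑ i, π i q) * g q) ≤ 0 := by
      simp only [Finset.sum_mul]
      rw [intervalIntegral.integral_finsetSum fun i _ => (hint i).mono_set (hsub1 j)]
      refine Finset.sum_nonpos fun i _ => ?_
      rw [← hob i]
      refine intervalIntegral.integral_mono_interval le_rfl (hc j).1 (hcj i) ?_
        ((hint i).mono_set (hsub1 i))
      refine (ae_restrict_iff' measurableSet_Ioc).mpr (Filter.Eventually.of_forall fun q hqm => ?_)
      exact mul_nonneg (h0 i q ⟨hqm.1.le, hqm.2.trans (hc i).2⟩) (hg_nonneg q)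
    have habove : (∫ q in (c j)..q2, (∑ i, π i q) * g q) ≤ ∫ q in (c j)..q2, g q := by
      refine intervalIntegral.integral_mono_on (hc j).2 (hintS.mono_set hsub2)
        (hg_int.mono_set hsub2) fun q hqm => ?_
      exact mul_le_of_le_one_left (hg_nonneg q) (h1 q ⟨(hc j).1.trans hqm.1, hqm.2⟩)
    rw [← intervalIntegral.integral_add_adjacent_intervals (hintS.mono_set (hsub1 j))
      (hintS.mono_set hsub2)]
    linarith
end

section
/- Let N be a finite nonempty set of buyers with valuations v_i that are nonnegative and integrable with respect to g on [q1, q2], let p ≥ 0, and let π_i : ℝ → ℝ be measurable with π_i(q) ≥ 0 and Σ_{i ∈ N} π_i(q) ≤ 1 for all q ∈ [q1, q2]. If the ex-interim obedience constraints ∫_{q1}^{q2} π_i(q)(v_i(q) − p) g(q) dq ≥ 0 hold for every i ∈ N, then the seller's revenue is bounded by the expected maximum valuation: p · ∫_{q1}^{q2} Σ_{i ∈ N} π_i(q) g(q) dq ≤ ∫_{q1}^{q2} max_{i ∈ N} v_i(q) g(q) dq. -/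
open MeasureTheory

/-!
Obedience gives `p ∫ π_i g ≤ ∫ π_i v_i g` for each buyer. Summing over the buyers, the revenue is
at most `∫ (∑ i, π_i v_i) g`. Since the `π_i` are nonnegative with sum at most one and the
valuations are nonnegative, `∑ i, π_i v_i ≤ max_i v_i` pointwise, which is the claim. All the
functions involved are integrable because each `π_i` takes values in `[0, 1]` on the interval.
-/

/-- With multiple ex-interim rational buyers with nonnegative integrable
valuations, any signaling scheme `(π_i)` (nonnegative, summing to at most one on `[q1, q2]`)
satisfying the ex-interim obedience constraints `∫ π_i (v_i − p) g ≥ 0` for every buyer yields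
revenue at most the expected maximum valuation:
`p · ∫ (∑_i π_i) g ≤ ∫ max_i v_i(q) g(q) dq`. -/
theorem ex_interim_multi_buyer_revenue_upper_bound
    {ι : Type*} [Fintype ι] [Nonempty ι]
    (q1 q2 : ℝ) (hq : q1 < q2)
    (g : ℝ → ℝ) (hg_meas : Measurable g)
    (hg_nonneg : ∀ q, 0 ≤ g q)
    (hg_int : IntervalIntegrable g MeasureTheory.volume q1 q2)
    (hg_one : (∫ q in q1..q2, g q) = 1)
    (v : ι → ℝ → ℝ)
    (hv_nonneg : ∀ i, ∀ q ∈ Set.Icc q1 q2, 0 ≤ v i q)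
    (hv_int : ∀ i, IntervalIntegrable (fun q => v i q * g q) MeasureTheory.volume q1 q2)
    (p : ℝ) (hp : 0 ≤ p)
    (π : ι → ℝ → ℝ) (hπ_meas : ∀ i, Measurable (π i))
    (hπ_nonneg : ∀ i, ∀ q ∈ Set.Icc q1 q2, 0 ≤ π i q)
    (hπ_sum : ∀ q ∈ Set.Icc q1 q2, (∑ i, π i q) ≤ 1)
    (hob : ∀ i, 0 ≤ ∫ q in q1..q2, π i q * (v i q - p) * g q) :
    p * (∫ q in q1..q2, (∑ i, π i q) * g q)
      ≤ ∫ q in q1..q2, (Finset.univ.sup' Finset.univ_nonempty fun i => v i q) * g q := by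
  have hmem : ∀ᵐ q ∂(volume.restrict (Set.Ioc q1 q2)), q ∈ Set.Icc q1 q2 :=
    (ae_restrict_mem measurableSet_Ioc).mono fun q h => Set.Ioc_subset_Icc_self h
  simp only [intervalIntegral.integral_of_le hq.le] at *
  simp only [intervalIntegrable_iff_integrableOn_Ioc_of_le hq.le, IntegrableOn] at *
  set μ := volume.restrict (Set.Ioc q1 q2) with hμ
  have hπ_bdd : ∀ i, ∀ᵐ q ∂μ, ‖π i q‖ ≤ 1 := fun i => by
    filter_upwards [hmem] with q h
    rw [Real.norm_of_nonneg (hπ_nonneg i q h)]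
    exact (Finset.single_le_sum (f := fun j => π j q) (fun j _ => hπ_nonneg j q h)
      (Finset.mem_univ i)).trans (hπ_sum q h)
  have hπg : ∀ i, Integrable (fun q => π i q * g q) μ := fun i =>
    hg_int.bdd_mul (hπ_meas i).aestronglyMeasurable (hπ_bdd i)
  have hπv : ∀ i, Integrable (fun q => π i q * (v i q * g q)) μ := fun i =>
    (hv_int i).bdd_mul (hπ_meas i).aestronglyMeasurable (hπ_bdd i)
  -- `v i` itself need not be measurable where `g` vanishes, so the maximum is taken
  -- over the products `v i * g`.
  have hsup : Integrable
      (fun q => (Finset.univ.sup' Finset.univ_nonempty fun i => v i q) * g q) μ := by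
    have h : Integrable (Finset.univ.sup' Finset.univ_nonempty
        fun (i : ι) (q : ℝ) => v i q * g q) μ :=
      Finset.sup'_induction (p := fun f : ℝ → ℝ => Integrable f μ) _ _
        (fun _ h₁ _ h₂ => h₁.sup h₂) (fun i _ => hv_int i)
    convert h using 1
    funext q
    rw [Finset.sup'_apply, Finset.sup'_mul₀ (hg_nonneg q)]
  have hobey : ∀ i, p * ∫ q, π i q * g q ∂μ ≤ ∫ q, π i q * (v i q * g q) ∂μ := fun i => by
    have h := hob i
    have e : (fun q => π i q * (v i q - p) * g q)
        = fun q => π i q * (v i q * g q) - p * (π i q * g q) := by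
      funext q; ring
    rw [e, integral_sub (hπv i) ((hπg i).const_mul p), integral_const_mul] at h
    linarith
  calc p * ∫ q, (∑ i, π i q) * g q ∂μ
      = ∑ i, p * ∫ q, π i q * g q ∂μ := by
        simp only [Finset.sum_mul]
        rw [integral_finsetSum _ fun i _ => hπg i, Finset.mul_sum]
    _ ≤ ∑ i, ∫ q, π i q * (v i q * g q) ∂μ := Finset.sum_le_sum fun i _ => hobey i
    _ = ∫ q, ∑ i, π i q * (v i q * g q) ∂μ := (integral_finsetSum _ fun i _ => hπv i).symm
    _ ≤ _ := by
        refine integral_mono_ae (integrable_finsetSum _ fun i _ => hπv i) hsup ?_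
        filter_upwards [hmem] with q h
        set M := Finset.univ.sup' Finset.univ_nonempty fun i => v i q
        have hM : ∀ i, v i q ≤ M := fun i =>
          Finset.le_sup' (fun i => v i q) (Finset.mem_univ i)
        have hM0 : 0 ≤ M := (hv_nonneg (Classical.arbitrary ι) q h).trans (hM _)
        calc ∑ i, π i q * (v i q * g q) ≤ ∑ i, π i q * (M * g q) :=
              Finset.sum_le_sum fun i _ => mul_le_mul_of_nonneg_left
                (mul_le_mul_of_nonneg_right (hM i) (hg_nonneg q)) (hπ_nonneg i q h)
          _ = (∑ i, π i q) * (M * g q) := (Finset.sum_mul _ _ _).symm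
          _ ≤ M * g q := mul_le_of_le_one_left (mul_nonneg hM0 (hg_nonneg q)) (hπ_sum q h)
end
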